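/- arXiv:1803.00377 — 2 statements merged into one kernel-verified Lean document; each statement's English description precedes it below -/
import Mathlib

section
/- There exists a compact continuous linear operator T from L²(D, dA) to L²(D, dA) such that, for every f ∈ L²(D, dA) and almost every z ∈ D, the integral ∫_D f(w)/(z−w) dA(w) converges absolutely and Tf(z) = ∫_D f(w)/(z−w) dA(w). In other words, the Cauchy transform of the unit disc equipped with planar Lebesgue measure is a compact operator on L²(dA). -/
/-! For functions on a bounded set `s`, only the values of the kernel `1 / u` on the bounded set
`s - s` matter, and `1 / u` is locally integrable in the plane, so the kernel may be cut off to an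
integrable function `g`. By the Schur test the `L¹` norm of `g` bounds the operator norm of
convolution with `g`, uniformly in the exponent; approximating in `L¹`, one may therefore take `g`
continuous with compact support. Then `g (z - w)` is uniformly close to `g (t z - w)`, where `t`
takes finitely many values and is close to the identity on `s`, and this last kernel defines an
operator of finite rank. Thus the operator is a norm limit of finite rank operators. -/

open MeasureTheory Metric Complex

/-- `dA` : the planar Lebesgue measure restricted to the open unit disc `D`. -/
noncomputable def dA : Measure ℂ := (volume : Measure ℂ).restrict (ball (0:ℂ) 1)

open Set Function
open scoped ENNReal NNReal

section LintegralSchur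

variable {α β : Type*} [MeasurableSpace α] [MeasurableSpace β] {μ : Measure α} {ν : Measure β}

lemma rpow_lintegral_mul_le_lintegral_mul_rpow {k h : β → ℝ≥0∞} (hk : AEMeasurable k ν)
    (hh : AEMeasurable h ν) {r : ℝ} (hr : 1 ≤ r) :
    (∫⁻ w, k w * h w ∂ν) ^ r ≤ (∫⁻ w, k w ∂ν) ^ (r - 1) * ∫⁻ w, k w * h w ^ r ∂ν := by
  have hr0 : 0 < r := one_pos.trans_le hr
  have jensen := eLpNorm'_le_eLpNorm'_mul_rpow_measure_univ one_pos hr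
    (hh.mono_ac (withDensity_absolutelyContinuous ν k)).aestronglyMeasurable
  simp only [eLpNorm'_eq_lintegral_enorm, enorm_eq_self, ENNReal.rpow_one, one_div, inv_one,
    lintegral_withDensity_eq_lintegral_mul₀ hk hh, withDensity_apply k MeasurableSet.univ,
    lintegral_withDensity_eq_lintegral_mul₀ hk (hh.pow_const r), Measure.restrict_univ,
    Pi.mul_apply] at jensen
  calc (∫⁻ w, k w * h w ∂ν) ^ r
      ≤ ((∫⁻ w, k w * h w ^ r ∂ν) ^ r⁻¹ * (∫⁻ w, k w ∂ν) ^ (1 - r⁻¹)) ^ r := by gcongr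
    _ = (∫⁻ w, k w ∂ν) ^ (r - 1) * ∫⁻ w, k w * h w ^ r ∂ν := by
        rw [ENNReal.mul_rpow_of_nonneg _ _ hr0.le, ← ENNReal.rpow_mul, ← ENNReal.rpow_mul,
          sub_mul, inv_mul_cancel₀ hr0.ne', one_mul, ENNReal.rpow_one, mul_comm]

lemma ae_lt_top_of_eLpNorm_lt_top {h : α → ℝ≥0∞} (hh : AEMeasurable h μ) {p : ℝ≥0∞} (hp : p ≠ 0)
    (hlt : eLpNorm h p μ < ∞) : ∀ᵐ z ∂μ, h z < ∞ := by
  obtain rfl | hp_top := eq_or_ne p ∞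
  · filter_upwards [ae_le_eLpNormEssSup (f := h) (μ := μ)] with z hz
    exact hz.trans_lt (by simpa using hlt)
  · have hpow := lintegral_rpow_enorm_lt_top_of_eLpNorm_lt_top hp hp_top hlt
    filter_upwards [ae_lt_top' (hh.enorm.pow_const _) hpow.ne] with z hz
    exact (ENNReal.rpow_lt_top_iff_of_pos (ENNReal.toReal_pos hp hp_top)).1 hz

variable [SFinite μ] [SFinite ν]

lemma lintegral_rpow_lintegral_mul_le {k : α → β → ℝ≥0∞}
    (hk : AEMeasurable (uncurry k) (μ.prod ν)) {h : β → ℝ≥0∞} (hh : AEMeasurable h ν) {C : ℝ≥0∞}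
    (hrow : ∀ᵐ z ∂μ, ∫⁻ w, k z w ∂ν ≤ C) (hcol : ∀ᵐ w ∂ν, ∫⁻ z, k z w ∂μ ≤ C)
    {r : ℝ} (hr : 1 ≤ r) :
    ∫⁻ z, (∫⁻ w, k z w * h w ∂ν) ^ r ∂μ ≤ C ^ r * ∫⁻ w, h w ^ r ∂ν := by
  have hkh : AEMeasurable (uncurry fun z w => k z w * h w ^ r) (μ.prod ν) :=
    hk.mul ((hh.comp_snd (μ := μ)).pow_const r)
  calc ∫⁻ z, (∫⁻ w, k z w * h w ∂ν) ^ r ∂μ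
      ≤ ∫⁻ z, C ^ (r - 1) * ∫⁻ w, k z w * h w ^ r ∂ν ∂μ := by
        refine lintegral_mono_ae ?_
        filter_upwards [hrow, hk.aestronglyMeasurable.prodMk_left] with z hz hkz
        refine (rpow_lintegral_mul_le_lintegral_mul_rpow hkz.aemeasurable hh hr).trans ?_
        exact mul_le_mul' (ENNReal.rpow_le_rpow hz (sub_nonneg.2 hr)) le_rfl
    _ = C ^ (r - 1) * ∫⁻ z, ∫⁻ w, k z w * h w ^ r ∂ν ∂μ :=
        lintegral_const_mul'' _ hkh.lintegral_prod_right'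
    _ = C ^ (r - 1) * ∫⁻ w, ∫⁻ z, k z w * h w ^ r ∂μ ∂ν := by rw [lintegral_lintegral_swap hkh]
    _ ≤ C ^ (r - 1) * ∫⁻ w, C * h w ^ r ∂ν := by
        gcongr 1
        refine lintegral_mono_ae ?_
        filter_upwards [hcol, hk.aestronglyMeasurable.prodMk_right] with w hw hkw
        calc ∫⁻ z, k z w * h w ^ r ∂μ = (∫⁻ z, k z w ∂μ) * h w ^ r :=
              lintegral_mul_const'' _ hkw.aemeasurable
          _ ≤ C * h w ^ r := by gcongr
    _ = C ^ r * ∫⁻ w, h w ^ r ∂ν := by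
        rw [lintegral_const_mul'' _ (hh.pow_const r), ← mul_assoc]
        congr 1
        nth_rw 2 [← ENNReal.rpow_one C]
        rw [← ENNReal.rpow_add_of_nonneg _ _ (by linarith) one_pos.le, sub_add_cancel]

lemma eLpNorm_lintegral_mul_le {k : α → β → ℝ≥0∞}
    (hk : AEMeasurable (uncurry k) (μ.prod ν)) {h : β → ℝ≥0∞} (hh : AEMeasurable h ν) {C : ℝ≥0∞}
    (hrow : ∀ᵐ z ∂μ, ∫⁻ w, k z w ∂ν ≤ C) (hcol : ∀ᵐ w ∂ν, ∫⁻ z, k z w ∂μ ≤ C)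
    {p : ℝ≥0∞} (hp : 1 ≤ p) :
    eLpNorm (fun z => ∫⁻ w, k z w * h w ∂ν) p μ ≤ C * eLpNorm h p ν := by
  obtain rfl | hp_top := eq_or_ne p ∞
  · simp only [eLpNorm_exponent_top]
    refine essSup_le_of_ae_le _ ?_
    filter_upwards [hrow, hk.aestronglyMeasurable.prodMk_left] with z hz hkz
    calc ∫⁻ w, k z w * h w ∂ν ≤ ∫⁻ w, k z w * eLpNormEssSup h ν ∂ν := by
          refine lintegral_mono_ae ?_
          filter_upwards [ae_le_eLpNormEssSup (f := h) (μ := ν)] with w hw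
          gcongr
          exact hw
      _ = (∫⁻ w, k z w ∂ν) * eLpNormEssSup h ν := lintegral_mul_const'' _ hkz.aemeasurable
      _ ≤ C * eLpNormEssSup h ν := by gcongr
  · have hr : 1 ≤ p.toReal := by
      simpa using ENNReal.toReal_mono hp_top hp
    have hr0 : 0 < p.toReal := one_pos.trans_le hr
    have hp0 : p ≠ 0 := (one_pos.trans_le hp).ne'
    simp only [eLpNorm_eq_lintegral_rpow_enorm_toReal hp0 hp_top, enorm_eq_self, one_div]
    calc (∫⁻ z, (∫⁻ w, k z w * h w ∂ν) ^ p.toReal ∂μ) ^ p.toReal⁻¹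
        ≤ (C ^ p.toReal * ∫⁻ w, h w ^ p.toReal ∂ν) ^ p.toReal⁻¹ := by
          gcongr
          exact lintegral_rpow_lintegral_mul_le hk hh hrow hcol hr
      _ = C * (∫⁻ w, h w ^ p.toReal ∂ν) ^ p.toReal⁻¹ := by
          rw [ENNReal.mul_rpow_of_nonneg _ _ (inv_nonneg.2 hr0.le), ENNReal.rpow_rpow_inv hr0.ne']

end LintegralSchur

lemma isCompactOperator_of_finiteDimensional_range {𝕜 E F : Type*} [NontriviallyNormedField 𝕜]
    [LocallyCompactSpace 𝕜] [TopologicalSpace E] [AddCommMonoid E] [Module 𝕜 E]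
    [TopologicalSpace F] [AddCommGroup F] [Module 𝕜 F] [IsTopologicalAddGroup F]
    [ContinuousSMul 𝕜 F] (T : E →L[𝕜] F) [FiniteDimensional 𝕜 T.range] : IsCompactOperator T :=
  have : ProperSpace 𝕜 := .of_locallyCompactSpace 𝕜
  have : LocallyCompactSpace T.range := .of_finiteDimensional_of_complete 𝕜 T.range
  (isCompactOperator_of_locallyCompactSpace_dom T.rangeRestrict).clm_comp T.range.subtypeL

section IntegralOperator

variable {𝕜 : Type*} [RCLike 𝕜] {α β : Type*} [MeasurableSpace α] [MeasurableSpace β]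
  {μ : Measure α} {ν : Measure β} {p : ℝ≥0∞}

/-- The hypothesis of the Schur test: both marginals of the measurable kernel `|K|` are bounded
by `C`. -/
structure HasSchurBound (K : α → β → 𝕜) (C : ℝ≥0) (μ : Measure α) (ν : Measure β) : Prop where
  aestronglyMeasurable : AEStronglyMeasurable (uncurry K) (μ.prod ν)
  lintegral_row_le : ∀ᵐ z ∂μ, ∫⁻ w, ‖K z w‖ₑ ∂ν ≤ C
  lintegral_col_le : ∀ᵐ w ∂ν, ∫⁻ z, ‖K z w‖ₑ ∂μ ≤ C

/-- `T` is the integral operator with kernel `K`, the defining integral being absolutely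
convergent almost everywhere. -/
def HasIntegralKernel [Fact (1 ≤ p)] (T : Lp 𝕜 p ν →L[𝕜] Lp 𝕜 p μ) (K : α → β → 𝕜) : Prop :=
  ∀ f : Lp 𝕜 p ν, ∀ᵐ z ∂μ, Integrable (fun w => K z w * f w) ν ∧ T f z = ∫ w, K z w * f w ∂ν

lemma hasSchurBound_of_ae_norm_le [IsFiniteMeasure μ] [IsFiniteMeasure ν] {K : α → β → 𝕜}
    (hK : AEStronglyMeasurable (uncurry K) (μ.prod ν)) {C : ℝ≥0}
    (hC : ∀ᵐ x ∂μ.prod ν, ‖K x.1 x.2‖ ≤ C) :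
    HasSchurBound K (C * max (measureUnivNNReal μ) (measureUnivNNReal ν)) μ ν where
  aestronglyMeasurable := hK
  lintegral_row_le := by
    filter_upwards [Measure.ae_ae_of_ae_prod hC] with z hz
    calc ∫⁻ w, ‖K z w‖ₑ ∂ν ≤ ∫⁻ _, C ∂ν := lintegral_mono_ae (hz.mono fun w hw => by
          exact_mod_cast hw)
      _ ≤ _ := by
        rw [lintegral_const, ENNReal.coe_mul, ← coe_measureUnivNNReal ν]
        gcongr
        exact le_max_right _ _
  lintegral_col_le := by
    filter_upwards [Measure.ae_ae_of_ae_prod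
      (Measure.measurePreserving_swap.quasiMeasurePreserving.ae hC)] with w hw
    calc ∫⁻ z, ‖K z w‖ₑ ∂μ ≤ ∫⁻ _, C ∂μ := lintegral_mono_ae (hw.mono fun z hz => by
          exact_mod_cast hz)
      _ ≤ _ := by
        rw [lintegral_const, ENNReal.coe_mul, ← coe_measureUnivNNReal μ]
        gcongr
        exact le_max_left _ _

namespace HasSchurBound

variable {K : α → β → 𝕜} {C D : ℝ≥0} {f : β → 𝕜}

lemma mono (hK : HasSchurBound K C μ ν) (hCD : C ≤ D) : HasSchurBound K D μ ν where
  aestronglyMeasurable := hK.aestronglyMeasurable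
  lintegral_row_le := hK.lintegral_row_le.mono fun _ h => h.trans (mod_cast hCD)
  lintegral_col_le := hK.lintegral_col_le.mono fun _ h => h.trans (mod_cast hCD)

lemma aestronglyMeasurable_mul (hK : HasSchurBound K C μ ν) (hf : AEStronglyMeasurable f ν) :
    AEStronglyMeasurable (uncurry fun z w => K z w * f w) (μ.prod ν) :=
  hK.aestronglyMeasurable.mul hf.comp_snd

variable [SFinite μ] [SFinite ν]

lemma eLpNorm_lintegral_enorm_mul_le (hK : HasSchurBound K C μ ν) (hp : 1 ≤ p)
    (hf : AEStronglyMeasurable f ν) :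
    eLpNorm (fun z => ∫⁻ w, ‖K z w * f w‖ₑ ∂ν) p μ ≤ C * eLpNorm f p ν := by
  simp only [enorm_mul]
  rw [← eLpNorm_enorm f]
  exact eLpNorm_lintegral_mul_le hK.aestronglyMeasurable.enorm hf.enorm hK.lintegral_row_le
    hK.lintegral_col_le hp

lemma ae_integrable_mul (hK : HasSchurBound K C μ ν) (hp : 1 ≤ p) (hf : MemLp f p ν) :
    ∀ᵐ z ∂μ, Integrable (fun w => K z w * f w) ν := by
  have hKf := hK.aestronglyMeasurable_mul hf.1
  have hfin : ∀ᵐ z ∂μ, ∫⁻ w, ‖K z w * f w‖ₑ ∂ν < ∞ :=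
    ae_lt_top_of_eLpNorm_lt_top hKf.enorm.lintegral_prod_right' (one_pos.trans_le hp).ne'
      ((hK.eLpNorm_lintegral_enorm_mul_le hp hf.1).trans_lt
        (ENNReal.mul_lt_top ENNReal.coe_lt_top hf.2))
  filter_upwards [hfin, hKf.prodMk_left] with z hz hmeas
  exact ⟨hmeas, hz⟩

lemma eLpNorm_integral_mul_le (hK : HasSchurBound K C μ ν) (hp : 1 ≤ p)
    (hf : AEStronglyMeasurable f ν) :
    eLpNorm (fun z => ∫ w, K z w * f w ∂ν) p μ ≤ C * eLpNorm f p ν :=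
  (eLpNorm_mono_enorm fun _ => enorm_integral_le_lintegral_enorm _).trans
    (hK.eLpNorm_lintegral_enorm_mul_le hp hf)

lemma memLp_integral_mul (hK : HasSchurBound K C μ ν) (hp : 1 ≤ p) (hf : MemLp f p ν) :
    MemLp (fun z => ∫ w, K z w * f w ∂ν) p μ :=
  ⟨(hK.aestronglyMeasurable_mul hf.1).integral_prod_right',
    (hK.eLpNorm_integral_mul_le hp hf.1).trans_lt (ENNReal.mul_lt_top ENNReal.coe_lt_top hf.2)⟩

theorem exists_hasIntegralKernel [Fact (1 ≤ p)] (hK : HasSchurBound K C μ ν) :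
    ∃ T : Lp 𝕜 p ν →L[𝕜] Lp 𝕜 p μ, ‖T‖ ≤ C ∧ HasIntegralKernel T K := by
  have hp : 1 ≤ p := Fact.out
  have hmem (f : Lp 𝕜 p ν) := hK.memLp_integral_mul hp (Lp.memLp f)
  have hint (f : Lp 𝕜 p ν) := hK.ae_integrable_mul hp (Lp.memLp f)
  let L : Lp 𝕜 p ν →ₗ[𝕜] Lp 𝕜 p μ :=
    { toFun f := (hmem f).toLp _
      map_add' f g := by
        rw [← MemLp.toLp_add]
        refine MemLp.toLp_congr _ _ ?_
        filter_upwards [hint f, hint g] with z hf hg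
        rw [Pi.add_apply, ← integral_add hf hg]
        refine integral_congr_ae ?_
        filter_upwards [Lp.coeFn_add f g] with w hw
        rw [hw, Pi.add_apply, mul_add]
      map_smul' c f := by
        rw [RingHom.id_apply, ← MemLp.toLp_const_smul]
        refine MemLp.toLp_congr _ _ (.of_forall fun z => ?_)
        rw [Pi.smul_apply, ← integral_smul]
        refine integral_congr_ae ?_
        filter_upwards [Lp.coeFn_smul c f] with w hw
        rw [hw, Pi.smul_apply, mul_smul_comm] }
  have hL (f : Lp 𝕜 p ν) : ‖L f‖ ≤ C * ‖f‖ := by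
    have hfin : C * eLpNorm f p ν ≠ ∞ :=
      ENNReal.mul_ne_top ENNReal.coe_ne_top (Lp.eLpNorm_ne_top f)
    calc ‖L f‖ = (eLpNorm (fun z => ∫ w, K z w * f w ∂ν) p μ).toReal := Lp.norm_toLp _ (hmem f)
      _ ≤ (C * eLpNorm f p ν).toReal :=
          ENNReal.toReal_mono hfin (hK.eLpNorm_integral_mul_le hp (Lp.aestronglyMeasurable f))
      _ = C * ‖f‖ := by rw [ENNReal.toReal_mul, ENNReal.coe_toReal, Lp.norm_def]
  refine ⟨L.mkContinuous C hL, L.mkContinuous_norm_le C.2 hL, fun f => ?_⟩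
  filter_upwards [hint f, (hmem f).coeFn_toLp] with z hz hz'
  exact ⟨hz, hz'⟩

end HasSchurBound

namespace HasIntegralKernel

variable [Fact (1 ≤ p)] {T S : Lp 𝕜 p ν →L[𝕜] Lp 𝕜 p μ} {K L : α → β → 𝕜}

lemma congr (hT : HasIntegralKernel T K) (hKL : ∀ᵐ z ∂μ, K z =ᵐ[ν] L z) :
    HasIntegralKernel T L := fun f => by
  filter_upwards [hT f, hKL] with z hz hKLz
  have hae : (fun w => K z w * f w) =ᵐ[ν] fun w => L z w * f w := hKLz.mul .rfl
  exact ⟨hz.1.congr hae, hz.2.trans (integral_congr_ae hae)⟩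

lemma sub (hT : HasIntegralKernel T K) (hS : HasIntegralKernel S L) :
    HasIntegralKernel (T - S) (fun z w => K z w - L z w) := fun f => by
  filter_upwards [hT f, hS f, Lp.coeFn_sub (T f) (S f)] with z hTz hSz hsub
  simp only [sub_mul]
  refine ⟨hTz.1.sub hSz.1, ?_⟩
  rw [sub_apply, hsub, Pi.sub_apply, hTz.2, hSz.2, integral_sub hTz.1 hSz.1]

lemma isCompactOperator_of_approx [SFinite μ] [SFinite ν] (hT : HasIntegralKernel T K)
    (happrox : ∀ ε : ℝ≥0, 0 < ε → ∃ L : α → β → 𝕜,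
      HasSchurBound (fun z w => K z w - L z w) ε μ ν ∧
      ∀ S : Lp 𝕜 p ν →L[𝕜] Lp 𝕜 p μ, HasIntegralKernel S L → IsCompactOperator S) :
    IsCompactOperator T := by
  suffices T ∈ closure {S : Lp 𝕜 p ν →L[𝕜] Lp 𝕜 p μ | IsCompactOperator S} from
    isClosed_setOfPred_isCompactOperator.closure_subset this
  refine Metric.mem_closure_iff.2 fun ε hε => ?_
  obtain ⟨L, hbound, hcompact⟩ := happrox (ε / 2).toNNReal (by simpa using hε)
  obtain ⟨D, hD_norm, hD⟩ := hbound.exists_hasIntegralKernel (p := p)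
  have hTD : HasIntegralKernel (T - D) L :=
    (hT.sub hD).congr (.of_forall fun z => .of_forall fun w => sub_sub_cancel _ _)
  refine ⟨T - D, hcompact _ hTD, ?_⟩
  calc dist T (T - D) = ‖D‖ := by rw [dist_eq_norm, sub_sub_cancel]
    _ ≤ ε / 2 := hD_norm.trans (Real.coe_toNNReal _ (half_pos hε).le).le
    _ < ε := half_lt_self hε

lemma isCompactOperator_of_finite [IsFiniteMeasure μ] {ι : Type*} [Finite ι] {s : α → ι}
    (hs : ∀ i, MeasurableSet (s ⁻¹' {i})) {k : ι → β → 𝕜}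
    (hT : HasIntegralKernel T (fun z => k (s z))) : IsCompactOperator T := by
  let _ : MeasurableSpace ι := ⊤
  have hmem (c : ι → 𝕜) : MemLp (c ∘ s) p μ :=
    MemLp.of_discrete.comp_measurePreserving ((measurable_to_countable' hs).measurePreserving μ)
  let stepFun : (ι → 𝕜) →ₗ[𝕜] Lp 𝕜 p μ :=
    { toFun c := (hmem c).toLp _
      map_add' _ _ := rfl
      map_smul' _ _ := rfl }
  have hrange : T.range ≤ stepFun.range := by
    rintro _ ⟨f, rfl⟩
    refine ⟨fun i => ∫ w, k i w * f w ∂ν, Lp.ext ?_⟩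
    filter_upwards [hT f, (hmem fun i => ∫ w, k i w * f w ∂ν).coeFn_toLp] with z hz hstep
    exact hstep.trans hz.2.symm
  have := Submodule.finiteDimensional_of_le hrange
  exact isCompactOperator_of_finiteDimensional_range T

end HasIntegralKernel

end IntegralOperator

lemma exists_simpleFunc_dist_lt_of_totallyBounded {X : Type*} [PseudoMetricSpace X]
    [MeasurableSpace X] [OpensMeasurableSpace X] {s : Set X} (hs : TotallyBounded s)
    {δ : ℝ} (hδ : 0 < δ) : ∃ t : SimpleFunc X X, ∀ z ∈ s, dist (t z) z < δ := by
  obtain ⟨c, hc, hsc⟩ := Metric.totallyBounded_iff.1 hs δ hδ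
  suffices ∃ t : SimpleFunc X X, ∀ z ∈ ⋃ y ∈ c, ball y δ, dist (t z) z < δ from
    this.imp fun t ht z hz => ht z (hsc hz)
  clear hsc
  induction c, hc using Set.Finite.induction_on with
  | empty =>
    cases isEmpty_or_nonempty X
    · exact ⟨.ofIsEmpty, by simp⟩
    · exact ⟨.const X (Classical.arbitrary X), by simp⟩
  | @insert y c _ _ ih =>
    obtain ⟨t, ht⟩ := ih
    refine ⟨.piecewise (ball y δ) measurableSet_ball (.const X y) t, fun z hz => ?_⟩
    rw [biUnion_insert] at hz
    by_cases hzy : z ∈ ball y δ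
    · simpa only [SimpleFunc.piecewise_apply, if_pos hzy, SimpleFunc.const_apply] using
        mem_ball'.1 hzy
    · simpa [hzy] using ht z (hz.resolve_left hzy)

lemma ae_restrict_mem_closure {X : Type*} [TopologicalSpace X] [MeasurableSpace X]
    [OpensMeasurableSpace X] {μ : Measure X} (s : Set X) : ∀ᵐ z ∂μ.restrict s, z ∈ closure s :=
  ae_restrict_of_ae_restrict_of_subset subset_closure
    (ae_restrict_mem isClosed_closure.measurableSet)

lemma HasIntegralKernel.isCompactOperator_of_uniformEquicontinuous {𝕜 : Type*} [RCLike 𝕜]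
    {X β : Type*} [PseudoMetricSpace X] [MeasurableSpace X] [OpensMeasurableSpace X]
    [MeasurableSpace β] {μ : Measure X} {ν : Measure β} [IsFiniteMeasure μ] [IsFiniteMeasure ν]
    {p : ℝ≥0∞} [Fact (1 ≤ p)] {T : Lp 𝕜 p ν →L[𝕜] Lp 𝕜 p μ} {K : X → β → 𝕜}
    (hT : HasIntegralKernel T K) (hK : Measurable (uncurry K))
    (hequi : UniformEquicontinuous fun w z => K z w) {s : Set X} (hs : TotallyBounded s)
    (hμs : ∀ᵐ z ∂μ, z ∈ s) : IsCompactOperator T := by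
  refine hT.isCompactOperator_of_approx fun ε hε => ?_
  obtain ⟨η, hη, hηε⟩ :=
    exists_pos_mul_lt hε (max (measureUnivNNReal μ) (measureUnivNNReal ν))
  obtain ⟨δ, hδ, hKδ⟩ := Metric.uniformEquicontinuous_iff.1 hequi η hη
  obtain ⟨t, ht⟩ := exists_simpleFunc_dist_lt_of_totallyBounded hs hδ
  refine ⟨fun z => K (t z), ?_, fun S hS => ?_⟩
  · have hmeas : Measurable (uncurry fun z w => K z w - K (t z) w) :=
      hK.sub (hK.comp ((t.measurable.comp measurable_fst).prodMk measurable_snd))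
    refine (hasSchurBound_of_ae_norm_le hmeas.aestronglyMeasurable (C := η) ?_).mono
      (mul_comm η _ ▸ hηε.le)
    filter_upwards [Measure.quasiMeasurePreserving_fst.ae hμs] with x hx
    rw [← dist_eq_norm, dist_comm]
    exact (hKδ _ _ (ht _ hx) x.2).le
  · have : Finite (range t) := t.finite_range
    exact hS.isCompactOperator_of_finite (s := rangeFactorization t) (k := fun a => K a)
      fun a => by
        simpa only [preimage, mem_singleton_iff, Subtype.ext_iff, rangeFactorization_coe] using
          t.measurableSet_fiber a

section Convolution

variable {𝕜 : Type*} [RCLike 𝕜] {G : Type*} [NormedAddCommGroup G] [ProperSpace G]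
  [MeasurableSpace G] [BorelSpace G] {lam : Measure G} [lam.IsAddHaarMeasure] {g : G → 𝕜}
  {s : Set G} {p : ℝ≥0∞} [Fact (1 ≤ p)]

lemma hasSchurBound_sub {C : ℝ≥0} (hg : AEStronglyMeasurable g lam)
    (hC : ∫⁻ u, ‖g u‖ₑ ∂lam ≤ C) (s t : Set G) :
    HasSchurBound (fun z w => g (z - w)) C (lam.restrict s) (lam.restrict t) where
  aestronglyMeasurable := by
    rw [Measure.prod_restrict]
    exact (hg.comp_quasiMeasurePreserving
      (quasiMeasurePreserving_sub_of_right_invariant lam lam)).restrict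
  lintegral_row_le := .of_forall fun z => (setLIntegral_le_lintegral _ _).trans <|
    (lintegral_sub_left_eq_self (fun u => ‖g u‖ₑ) z).le.trans hC
  lintegral_col_le := .of_forall fun w => (setLIntegral_le_lintegral _ _).trans <|
    (lintegral_sub_right_eq_self (fun u => ‖g u‖ₑ) w).le.trans hC

lemma HasIntegralKernel.isCompactOperator_of_integrable
    {T : Lp 𝕜 p (lam.restrict s) →L[𝕜] Lp 𝕜 p (lam.restrict s)}
    (hT : HasIntegralKernel T (fun z w => g (z - w))) (hg : Integrable g lam)
    (hs : Bornology.IsBounded s) : IsCompactOperator T := by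
  have : IsFiniteMeasure (lam.restrict s) := isFiniteMeasure_restrict.2 hs.measure_lt_top.ne
  refine hT.isCompactOperator_of_approx fun ε hε => ?_
  obtain ⟨φ, hφ_supp, hφ_le, hφ, hφ_int⟩ :=
    hg.exists_hasCompactSupport_lintegral_sub_le (ENNReal.coe_ne_zero.2 hε.ne')
  refine ⟨fun z w => φ (z - w), hasSchurBound_sub (hg.sub hφ_int).1 hφ_le s s, fun S hS => ?_⟩
  refine hS.isCompactOperator_of_uniformEquicontinuous
    (hφ.measurable.comp (measurable_fst.sub measurable_snd)) ?_
    hs.isCompact_closure.totallyBounded (ae_restrict_mem_closure s)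
  have hφ_unif := hφ_supp.uniformContinuous_of_continuous hφ
  refine Metric.uniformEquicontinuous_iff.2 fun η hη => ?_
  obtain ⟨δ, hδ, hφδ⟩ := Metric.uniformContinuous_iff.1 hφ_unif η hη
  exact ⟨δ, hδ, fun x y hxy w => hφδ (by rwa [dist_sub_right])⟩

theorem exists_isCompactOperator_hasIntegralKernel_sub (hg : LocallyIntegrable g lam)
    (hs : Bornology.IsBounded s) :
    ∃ T : Lp 𝕜 p (lam.restrict s) →L[𝕜] Lp 𝕜 p (lam.restrict s),
      IsCompactOperator T ∧ HasIntegralKernel T (fun z w => g (z - w)) := by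
  obtain ⟨R, hR⟩ := (hs.closure.sub hs.closure).subset_closedBall 0
  have hgR : Integrable ((closedBall 0 R).indicator g) lam :=
    (hg.integrableOn_isCompact (isCompact_closedBall 0 R)).integrable_indicator
      measurableSet_closedBall
  obtain ⟨T, -, hT⟩ := (hasSchurBound_sub hgR.1
    (ENNReal.coe_toNNReal hgR.2.ne).ge s s).exists_hasIntegralKernel (p := p)
  refine ⟨T, hT.isCompactOperator_of_integrable hgR hs, hT.congr ?_⟩
  filter_upwards [ae_restrict_mem_closure s] with z hz
  filter_upwards [ae_restrict_mem_closure s] with w hw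
  exact indicator_of_mem (hR (sub_mem_sub hz hw)) g

end Convolution

lemma locallyIntegrable_complex_inv : LocallyIntegrable (fun u : ℂ => u⁻¹) :=
  locallyIntegrable_of_norm_le_rpow (C := 1) (α := 1) (by simp) (by simp)
    (.of_forall fun u => by simp [Real.rpow_neg_one]) measurable_inv.aestronglyMeasurable

theorem stmt3_general {s : Set ℂ} (hs : Bornology.IsBounded s) {p : ℝ≥0∞} [Fact (1 ≤ p)] :
    ∃ T : Lp ℂ p (volume.restrict s) →L[ℂ] Lp ℂ p (volume.restrict s), IsCompactOperator T ∧
      ∀ f : Lp ℂ p (volume.restrict s), ∀ᵐ z ∂volume.restrict s,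
        Integrable (fun w => f w / (z - w)) (volume.restrict s) ∧
        T f z = ∫ w in s, f w / (z - w) := by
  obtain ⟨T, hT, hTK⟩ := exists_isCompactOperator_hasIntegralKernel_sub (p := p)
    locallyIntegrable_complex_inv hs
  exact ⟨T, hT, fun f => by simpa only [div_eq_inv_mul] using hTK f⟩

/-- The Cauchy transform of the unit disc with planar Lebesgue measure is a compact
operator on `L²(dA)`: there is a compact continuous linear operator `T` on `L²(D, dA)`
such that for every `f ∈ L²(D, dA)` and a.e. `z`, the integral `∫_D f(w)/(z-w) dA(w)`
converges absolutely and `T f z` equals it. -/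
theorem stmt3 :
    ∃ T : Lp ℂ 2 dA →L[ℂ] Lp ℂ 2 dA, IsCompactOperator (⇑T) ∧
      ∀ f : Lp ℂ 2 dA, ∀ᵐ z ∂dA,
        Integrable (fun w => f w / (z - w)) dA ∧
        T f z = ∫ w, f w / (z - w) ∂dA :=
  stmt3_general isBounded_ball
end

section
/- There is no compact continuous linear operator T : L²([0,1]) → L²([0,1]) with the property that for every f ∈ L²([0,1]) and almost every x ∈ [0,1], Tf(x) = lim_{ε→0⁺} ∫_{y ∈ [0,1], |x−y| > ε} f(y)/(x−y) dy. In other words, the Cauchy transform of the measure μ = H¹ restricted to the segment [0,1]×{0} (equivalently, the Hilbert transform restricted to [0,1]) is not a compact operator from L²(μ) to L²(μ). -/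
/-!
The Cauchy transform `T` moves a fixed fraction of mass from the left half of an interval to its
right half, at every scale. For `y ∈ (s, p]` and `x ∈ (p, q]` the kernel `1 / (x - y)` is at least
`1 / (q - s)`, so `T` sends the normalised indicator of `(s, p]` to a function whose inner product
with the normalised indicator of `(p, q]` is at least `√(μ (s, p]) * √(μ (p, q]) / (q - s)`. If `μ`
dominates `κ` times Lebesgue measure on `[s, t]`, this is at least `κ / 2` whenever `q ≤ t` and `p`
is the midpoint of `[s, q]`. As `q` runs through `s + (t - s) / 2 ^ n`, the intervals `(p, q]` are
disjoint, so their normalised indicators are orthonormal, and a compact `T` would force the inner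
products to tend to `0`.
-/

open MeasureTheory

/-- `μ01` : the 1-dimensional Lebesgue measure restricted to `[0,1]`. -/
noncomputable def μ01 : Measure ℝ := (volume : Measure ℝ).restrict (Set.Icc (0:ℝ) 1)

open Filter Set Function
open scoped Topology NNReal

section Compactness

variable {ι 𝕜 V E : Type*} [RCLike 𝕜] [NormedAddCommGroup E] [InnerProductSpace 𝕜 E] {e : ι → E}

theorem tendsto_inner_zero_of_orthonormal (he : Orthonormal 𝕜 e) (x : E) :
    Tendsto (fun i ↦ inner 𝕜 (e i) x) cofinite (𝓝 0) := by
  have h_sq := (he.inner_products_summable x).tendsto_cofinite_zero.sqrt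
  simp only [Real.sqrt_sq (norm_nonneg _), Real.sqrt_zero] at h_sq
  exact tendsto_zero_iff_norm_tendsto_zero.2 h_sq

theorem tendsto_inner_zero_of_mem_isCompact_of_orthonormal (he : Orthonormal 𝕜 e) {K : Set E}
    (hK : IsCompact K) {x : ι → E} (hx : ∀ i, x i ∈ K) :
    Tendsto (fun i ↦ inner 𝕜 (e i) (x i)) cofinite (𝓝 0) := by
  refine Metric.tendsto_nhds.2 fun ε hε ↦ ?_
  obtain ⟨net, -, h_finite, h_cover⟩ := hK.finite_cover_balls (half_pos hε)
  have h_net : ∀ᶠ i in cofinite, ∀ z ∈ net, ‖inner 𝕜 (e i) z‖ < ε / 2 :=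
    (eventually_all_finite h_finite).2 fun z _ ↦
      (tendsto_inner_zero_of_orthonormal he z).norm.eventually_lt_const (by simpa using half_pos hε)
  filter_upwards [h_net] with i hi
  obtain ⟨z, hz, hxz⟩ := mem_iUnion₂.1 (h_cover (hx i))
  rw [dist_zero_right]
  calc ‖inner 𝕜 (e i) (x i)‖
      = ‖inner 𝕜 (e i) (x i - z) + inner 𝕜 (e i) z‖ := by rw [← inner_add_right, sub_add_cancel]
    _ ≤ ‖inner 𝕜 (e i) (x i - z)‖ + ‖inner 𝕜 (e i) z‖ := norm_add_le _ _
    _ ≤ ‖x i - z‖ + ‖inner 𝕜 (e i) z‖ := by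
        gcongr
        simpa [he.1 i] using norm_inner_le_norm (𝕜 := 𝕜) (e i) (x i - z)
    _ < ε / 2 + ε / 2 := add_lt_add (mem_ball_iff_norm.1 hxz) (hi z hz)
    _ = ε := add_halves ε

theorem tendsto_inner_zero_of_isCompactOperator_of_orthonormal [SeminormedAddCommGroup V]
    [NormedSpace 𝕜 V] {T : V →ₗ[𝕜] E} (hT : IsCompactOperator T) (he : Orthonormal 𝕜 e) {R : ℝ}
    {u : ι → V} (hu : ∀ i, ‖u i‖ ≤ R) :
    Tendsto (fun i ↦ inner 𝕜 (e i) (T (u i))) cofinite (𝓝 0) := by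
  obtain ⟨K, hK, hTK⟩ := hT.image_closedBall_subset_compact R
  exact tendsto_inner_zero_of_mem_isCompact_of_orthonormal he hK fun i ↦
    hTK ⟨u i, mem_closedBall_zero_iff.2 (hu i), rfl⟩

end Compactness

section NormalizedIndicator

variable {α : Type*} [MeasurableSpace α] {μ : Measure α} {s : Set α}

/-- The indicator function of `s`, scaled to be a unit vector of `L²(μ)` when `μ s ≠ 0`; for
`μ s = 0` it is the zero vector. -/
noncomputable def normalizedIndicator (hs : MeasurableSet s) (hμs : μ s ≠ ⊤) : Lp ℝ 2 μ :=
  indicatorConstLp 2 hs hμs (√(μ.real s))⁻¹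

variable (hs : MeasurableSet s) (hμs : μ s ≠ ⊤)

theorem coeFn_normalizedIndicator :
    normalizedIndicator hs hμs =ᵐ[μ] s.indicator fun _ ↦ (√(μ.real s))⁻¹ :=
  indicatorConstLp_coeFn

theorem integrable_normalizedIndicator : Integrable (normalizedIndicator hs hμs) μ :=
  integrable_indicatorConstLp hs hμs _

theorem integral_normalizedIndicator : ∫ x, normalizedIndicator hs hμs x ∂μ = √(μ.real s) := by
  rw [normalizedIndicator, integral_indicatorConstLp, smul_eq_mul, ← div_eq_mul_inv,
    Real.div_sqrt]

theorem inner_normalizedIndicator (g : Lp ℝ 2 μ) :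
    inner ℝ (normalizedIndicator hs hμs) g = (∫ x in s, g x ∂μ) / √(μ.real s) := by
  rw [normalizedIndicator, L2.inner_indicatorConstLp_eq_inner_setIntegral, real_inner_eq_re_inner,
    RCLike.inner_apply, conj_trivial, RCLike.re_to_real, div_eq_mul_inv]

theorem norm_normalizedIndicator (h0 : μ s ≠ 0) : ‖normalizedIndicator hs hμs‖ = 1 := by
  have h_pos : 0 < √(μ.real s) := Real.sqrt_pos.2 (ENNReal.toReal_pos h0 hμs)
  rw [normalizedIndicator, norm_indicatorConstLp (by simp) (by simp), ENNReal.toReal_ofNat,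
    ← Real.sqrt_eq_rpow, norm_inv, Real.norm_of_nonneg h_pos.le, inv_mul_cancel₀ h_pos.ne']

theorem orthonormal_normalizedIndicator {ι : Type*} {s : ι → Set α}
    (hs : ∀ i, MeasurableSet (s i)) (hμs : ∀ i, μ (s i) ≠ ⊤) (h0 : ∀ i, μ (s i) ≠ 0)
    (h_disj : Pairwise (Disjoint on s)) :
    Orthonormal ℝ fun i ↦ normalizedIndicator (hs i) (hμs i) := by
  refine ⟨fun i ↦ norm_normalizedIndicator _ _ (h0 i), fun i j hij ↦ ?_⟩
  simp [normalizedIndicator, L2.inner_indicatorConstLp_indicatorConstLp,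
    (h_disj hij).inter_eq]

end NormalizedIndicator

section CauchyTransform

variable {μ : Measure ℝ} {f g : ℝ → ℝ} {a b c : ℝ}

/-- `g` is the Cauchy transform of `f` with respect to `μ`, as a principal value `μ`-almost
everywhere. -/
def HasCauchyTransform (μ : Measure ℝ) (f g : ℝ → ℝ) : Prop :=
  ∀ᵐ x ∂μ, Tendsto (fun ε : ℝ ↦ ∫ y in {y : ℝ | ε < |x - y|}, f y / (x - y) ∂μ)
    (𝓝[>] 0) (𝓝 (g x))

theorem integral_div_le_integral_truncated (hf : Integrable f μ) (hf0 : 0 ≤ᵐ[μ] f)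
    (hfs : ∀ᵐ y ∂μ, y ∉ Icc b a → f y = 0) {x ε : ℝ} (hx : x ∈ Ioc a c) (hε : ε < x - a) :
    (∫ y, f y ∂μ) / (c - b) ≤ ∫ y in {y : ℝ | ε < |x - y|}, f y / (x - y) ∂μ := by
  have hxa : 0 < x - a := sub_pos.2 hx.1
  have h_integrable : Integrable (fun y ↦ f y / (x - y)) μ := by
    refine (hf.div_const (x - a)).mono'
      (hf.aestronglyMeasurable.div₀ (by fun_prop)) ?_
    filter_upwards [hf0, hfs] with y hy0 hys
    by_cases hy : y ∈ Icc b a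
    · rw [norm_div, Real.norm_of_nonneg hy0, Real.norm_of_nonneg (by linarith [hy.2])]
      gcongr
      exact hy.2
    · simp [hys hy]
  have h_truncation : ∫ y in {y : ℝ | ε < |x - y|}, f y / (x - y) ∂μ
      = ∫ y, f y / (x - y) ∂μ := by
    refine setIntegral_eq_integral_of_ae_compl_eq_zero ?_
    filter_upwards [hfs] with y hys hyε
    have hy : y ∉ Icc b a := fun hy ↦
      hyε ((by linarith [hy.2] : ε < x - y).trans_le (le_abs_self _))
    rw [hys hy, zero_div]
  rw [h_truncation, ← integral_div]
  refine integral_mono_ae (hf.div_const _) h_integrable ?_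
  filter_upwards [hf0, hfs] with y hy0 hys
  by_cases hy : y ∈ Icc b a
  · have hxy : 0 < x - y := by linarith [hy.2]
    have h_le : x - y ≤ c - b := by linarith [hy.1, hx.2]
    exact div_le_div_of_nonneg_left hy0 hxy h_le
  · simp [hys hy]

theorem HasCauchyTransform.integral_div_le (h : HasCauchyTransform μ f g) (hf : Integrable f μ)
    (hf0 : 0 ≤ᵐ[μ] f) (hfs : ∀ᵐ y ∂μ, y ∉ Icc b a → f y = 0) :
    ∀ᵐ x ∂μ, x ∈ Ioc a c → (∫ y, f y ∂μ) / (c - b) ≤ g x := by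
  filter_upwards [h] with x hx hxa
  refine ge_of_tendsto hx ?_
  filter_upwards [mem_nhdsWithin_of_mem_nhds (Iio_mem_nhds (sub_pos.2 hxa.1))] with ε hε
  exact integral_div_le_integral_truncated hf hf0 hfs hxa hε

theorem HasCauchyTransform.le_inner_normalizedIndicator {A B : Set ℝ} (hA : MeasurableSet A)
    (hB : MeasurableSet B) (hμA : μ A ≠ ⊤) (hμB : μ B ≠ ⊤) (hAI : A ⊆ Icc b a) (hBI : B ⊆ Ioc a c)
    {g : Lp ℝ 2 μ} (h : HasCauchyTransform μ (normalizedIndicator hA hμA) g) :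
    √(μ.real A) * √(μ.real B) / (c - b) ≤ inner ℝ (normalizedIndicator hB hμB) g := by
  have h_nonneg : 0 ≤ᵐ[μ] normalizedIndicator hA hμA := by
    filter_upwards [coeFn_normalizedIndicator hA hμA] with y hy
    rw [hy]
    exact indicator_nonneg (fun _ _ ↦ by positivity) y
  have h_support : ∀ᵐ y ∂μ, y ∉ Icc b a → normalizedIndicator hA hμA y = 0 := by
    filter_upwards [coeFn_normalizedIndicator hA hμA] with y hy hyI
    rw [hy, indicator_of_notMem fun hyA ↦ hyI (hAI hyA)]
  have h_lower : ∀ᵐ x ∂μ, x ∈ B → √(μ.real A) / (c - b) ≤ g x := by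
    filter_upwards [h.integral_div_le (c := c) (integrable_normalizedIndicator hA hμA) h_nonneg
      h_support] with x hx hxB
    simpa only [integral_normalizedIndicator] using hx (hBI hxB)
  have h_integral : √(μ.real A) / (c - b) * μ.real B ≤ ∫ x in B, g x ∂μ := by
    rw [mul_comm, ← smul_eq_mul, ← setIntegral_const]
    exact setIntegral_mono_on_ae (integrableOn_const hμB)
      (integrableOn_Lp_of_measure_ne_top g fact_one_le_two_ennreal.elim hμB) hB h_lower
  calc √(μ.real A) * √(μ.real B) / (c - b)
      = √(μ.real A) / (c - b) * μ.real B / √(μ.real B) := by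
        rw [mul_div_assoc (_ / _), Real.div_sqrt, mul_div_right_comm]
    _ ≤ (∫ x in B, g x ∂μ) / √(μ.real B) := by gcongr
    _ = inner ℝ (normalizedIndicator hB hμB) g := (inner_normalizedIndicator hB hμB g).symm

end CauchyTransform

section LebesgueDomination

/-- The normalised indicator of the interval `(p, q]`, as a vector of `L²(μ)`. -/
noncomputable abbrev normalizedIndicatorIoc (μ : Measure ℝ) [IsLocallyFiniteMeasure μ] (p q : ℝ) :
    Lp ℝ 2 μ :=
  normalizedIndicator (s := Ioc p q) measurableSet_Ioc measure_Ioc_lt_top.ne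

variable {μ : Measure ℝ} [IsLocallyFiniteMeasure μ] {κ : ℝ≥0} {s t p q : ℝ}

theorem mul_sub_le_measureReal_Ioc (hμ : κ • volume.restrict (Icc s t) ≤ μ) (hsp : s ≤ p)
    (hpq : p ≤ q) (hqt : q ≤ t) : κ * (q - p) ≤ μ.real (Ioc p q) := by
  have h_subset : Ioc p q ⊆ Icc s t := Ioc_subset_Icc_self.trans (Icc_subset_Icc hsp hqt)
  calc κ * (q - p) = (κ • volume.restrict (Icc s t)).real (Ioc p q) := by
        rw [measureReal_nnreal_smul_apply, measureReal_restrict_apply measurableSet_Ioc,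
          inter_eq_left.2 h_subset, Real.volume_real_Ioc_of_le hpq]
    _ ≤ μ.real (Ioc p q) := ENNReal.toReal_mono measure_Ioc_lt_top.ne (hμ _)

theorem measure_Ioc_ne_zero_of_smul_volume_le (hκ : 0 < κ)
    (hμ : κ • volume.restrict (Icc s t) ≤ μ) (hsp : s ≤ p) (hpq : p < q) (hqt : q ≤ t) :
    μ (Ioc p q) ≠ 0 := by
  have h_pos : 0 < μ.real (Ioc p q) :=
    (mul_pos (NNReal.coe_pos.2 hκ) (sub_pos.2 hpq)).trans_le
      (mul_sub_le_measureReal_Ioc hμ hsp hpq.le hqt)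
  exact (ENNReal.toReal_pos_iff.1 h_pos).1.ne'

theorem HasCauchyTransform.half_le_inner_normalizedIndicatorIoc
    (hμ : κ • volume.restrict (Icc s t) ≤ μ) (hsp : s < p) (hqt : q ≤ t) (h_mid : q - p = p - s)
    {g : Lp ℝ 2 μ} (h : HasCauchyTransform μ (normalizedIndicatorIoc μ s p) g) :
    κ / 2 ≤ inner ℝ (normalizedIndicatorIoc μ p q) g := by
  have h_left : κ * (p - s) ≤ μ.real (Ioc s p) :=
    mul_sub_le_measureReal_Ioc hμ le_rfl hsp.le (by linarith)
  have h_right : κ * (p - s) ≤ μ.real (Ioc p q) :=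
    h_mid ▸ mul_sub_le_measureReal_Ioc hμ hsp.le (by linarith) hqt
  have h_len : 0 < p - s := sub_pos.2 hsp
  have h_double : q - s = 2 * (p - s) := by linarith
  calc (κ : ℝ) / 2 = √(κ * (p - s)) * √(κ * (p - s)) / (q - s) := by
        rw [Real.mul_self_sqrt (by positivity), h_double, mul_div_mul_right _ _ h_len.ne']
    _ ≤ √(μ.real (Ioc s p)) * √(μ.real (Ioc p q)) / (q - s) := by
        have : 0 ≤ q - s := by linarith
        gcongr
    _ ≤ inner ℝ (normalizedIndicatorIoc μ p q) g :=
        h.le_inner_normalizedIndicator _ _ _ _ Ioc_subset_Icc_self Subset.rfl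

theorem stmt4_general (hκ : 0 < κ) (hst : s < t) (hμ : κ • volume.restrict (Icc s t) ≤ μ) :
    ¬ ∃ T : Lp ℝ 2 μ →L[ℝ] Lp ℝ 2 μ, IsCompactOperator T ∧
      ∀ f : Lp ℝ 2 μ, HasCauchyTransform μ f (T f) := by
  rintro ⟨T, hT, hTf⟩
  let p : ℕ → ℝ := fun n ↦ s + (t - s) / 2 ^ n
  have hp_anti : StrictAnti p := fun m n hmn ↦ by
    have := sub_pos.2 hst
    dsimp only [p]
    gcongr
    norm_num
  have hp_gt (n : ℕ) : s < p n := lt_add_of_pos_right s (div_pos (sub_pos.2 hst) (by positivity))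
  have hp_le (n : ℕ) : p n ≤ t := (hp_anti.antitone n.zero_le).trans_eq (by simp [p])
  have hp_mid (n : ℕ) : p n - p (n + 1) = p (n + 1) - s := by simp only [p, pow_succ]; ring
  have hp_succ (n : ℕ) : p (n + 1) < p n := hp_anti n.lt_succ_self
  have h_orthonormal : Orthonormal ℝ fun n ↦ normalizedIndicatorIoc μ (p (n + 1)) (p n) :=
    orthonormal_normalizedIndicator _ _
      (fun n ↦ measure_Ioc_ne_zero_of_smul_volume_le hκ hμ (hp_gt _).le (hp_succ n) (hp_le n))
      hp_anti.antitone.pairwise_disjoint_on_Ioc_succ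
  have h_norm (n : ℕ) : ‖normalizedIndicatorIoc μ s (p (n + 1))‖ ≤ 1 :=
    (norm_normalizedIndicator _ _
      (measure_Ioc_ne_zero_of_smul_volume_le hκ hμ le_rfl (hp_gt _) (hp_le _))).le
  have h_tendsto := tendsto_inner_zero_of_isCompactOperator_of_orthonormal
    (T := T.toLinearMap) hT h_orthonormal h_norm
  have h_half : (κ : ℝ) / 2 ≤ 0 := ge_of_tendsto' h_tendsto fun n ↦
    HasCauchyTransform.half_le_inner_normalizedIndicatorIoc hμ (hp_gt _) (hp_le n) (hp_mid n)
      (hTf _)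
  exact (half_pos (NNReal.coe_pos.2 hκ)).not_ge h_half

end LebesgueDomination

/-- The Cauchy transform of `H¹` on the segment `[0,1]` (the Hilbert transform
restricted to `[0,1]`) is not a compact operator on `L²([0,1])`: there is no compact
continuous linear operator `T` on `L²([0,1])` such that for every `f` and a.e. `x`,
`T f x = lim_{ε→0⁺} ∫_{y ∈ [0,1], |x-y| > ε} f(y)/(x-y) dy`. -/
theorem stmt4 :
    ¬ ∃ T : Lp ℝ 2 μ01 →L[ℝ] Lp ℝ 2 μ01, IsCompactOperator (⇑T) ∧
        ∀ f : Lp ℝ 2 μ01, ∀ᵐ x ∂μ01,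
          Filter.Tendsto (fun ε : ℝ => ∫ y in {y : ℝ | ε < |x - y|}, f y / (x - y) ∂μ01)
            (nhdsWithin 0 (Set.Ioi 0)) (nhds (T f x)) :=
  stmt4_general (μ := volume.restrict (Icc 0 1)) one_pos zero_lt_one (one_smul ℝ≥0 _).le
end
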